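/- Let α > -1, 0 < t ≤ 2, and n ≥ 2. Then the zeros of L_n^α and L_{n-1}^{α+t} strictly interlace: between any two consecutive zeros of L_n^α there lies exactly one zero of L_{n-1}^{α+t}, and all n-1 zeros of L_{n-1}^{α+t} lie strictly between the smallest and largest zeros of L_n^α. -/

import Mathlib

open Finset

/-- Generalized Laguerre polynomial `L_n^α(x) = ∑_{k=0}^n (-1)^k C(n+α, n-k) x^k / k!`,
where `C(n+α, n-k) = (∏_{i=1}^{n-k} (α+k+i)) / (n-k)!`. -/
noncomputable def laguerre (α : ℝ) (n : ℕ) (x : ℝ) : ℝ :=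
  ∑ k ∈ Finset.range (n + 1),
    (-1 : ℝ) ^ k * (∏ i ∈ Finset.range (n - k), (α + k + 1 + i)) /
      ((Nat.factorial (n - k) : ℝ) * (Nat.factorial k : ℝ)) * x ^ k

/-! The zeros `x` of `L_n^α` are the equilibrium positions of unit charges on the half-line: each of
them satisfies `x i - 2 * ∑ j ≠ i, x i / (x i - x j) = α + 1` (Stieltjes), the right-hand side being
twice the charge at the origin. Deleting the largest zero of `L_{n+1}^α` lowers the balancing charge
of each of the others below `α + 1`, and deleting the smallest one raises it above `α + 3`. Since a
larger balancing charge forces positions farther from the origin, the zeros of `L_n^{α+t}`, with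
balancing charge `α + t + 1`, are squeezed between the two truncated sequences.

That `L_n^α` has `n` positive zeros follows by induction from Rolle's theorem on `[0, ∞)`, because
`(x^{α+1} e^{-x} L_n^{α+1})' = (n + 1) x^α e^{-x} L_{n+1}^α`. -/

section Polynomial

open Polynomial Lagrange

theorem coeff_X_mul_derivative {R : Type*} [Semiring R] (p : R[X]) (k : ℕ) :
    (X * derivative p).coeff k = p.coeff k * k := by
  cases k <;> simp [coeff_X_mul, coeff_derivative]

variable {K ι : Type*} [Field K] {s : Finset ι} {v : ι → K} {p : K[X]}

theorem eq_C_leadingCoeff_mul_nodal (hv : Set.InjOn v s) (hdeg : p.natDegree ≤ #s)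
    (hroot : ∀ i ∈ s, p.IsRoot (v i)) : p = C p.leadingCoeff * nodal s v := by
  refine eq_leadingCoeff_mul_of_monic_of_dvd_of_natDegree_le nodal_monic ?_ (by simpa using hdeg)
  refine Finset.prod_dvd_of_coprime (fun i hi j hj hij => ?_) fun i hi =>
    dvd_iff_isRoot.2 (hroot i hi)
  exact isCoprime_X_sub_C_of_isUnit_sub (sub_ne_zero.2 (hv.ne hi hj hij)).isUnit

theorem eval_derivative_nodal_not_at_node {a : K} (ha : ∀ i ∈ s, a ≠ v i) :
    (derivative (nodal s v)).eval a = (nodal s v).eval a * ∑ i ∈ s, (a - v i)⁻¹ := by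
  classical
  rw [derivative_nodal, eval_finsetSum, mul_sum]
  refine sum_congr rfl fun i hi => ?_
  have hne : a - v i ≠ 0 := sub_ne_zero.2 (ha i hi)
  rw [nodal_eq_mul_nodal_erase hi, eval_mul, eval_sub, eval_X, eval_C]
  field_simp

theorem eval_derivative_derivative_nodal_at_node [DecidableEq ι] (hv : Set.InjOn v s) {i : ι}
    (hi : i ∈ s) :
    (derivative (derivative (nodal s v))).eval (v i) =
      2 * (derivative (nodal s v)).eval (v i) * ∑ j ∈ s.erase i, (v i - v j)⁻¹ := by
  have hne : ∀ j ∈ s.erase i, v i ≠ v j := fun j hj =>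
    hv.ne hi (mem_of_mem_erase hj) (ne_of_mem_erase hj).symm
  rw [nodal_eq_mul_nodal_erase hi]
  simp only [derivative_mul, derivative_add, derivative_sub, derivative_X, derivative_C, eval_add,
    eval_mul, eval_sub, eval_X, eval_C, eval_one, sub_self, sub_zero, derivative_one, eval_zero,
    eval_derivative_nodal_not_at_node hne]
  ring

end Polynomial

section BalancingCharge

variable {K ι : Type*} [Field K] [Fintype ι]

/-- Twice the charge at the origin that keeps the unit charge at `x i` in equilibrium with the other
unit charges `x j` and a constant force `1 / 2` towards the origin, for logarithmic interaction.
The summand `j = i` vanishes because its denominator does. -/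
def balancingCharge (x : ι → K) (i : ι) : K :=
  x i - 2 * ∑ j, x i / (x i - x j)

open Polynomial Lagrange in
theorem balancingCharge_eq_of_differential_equation {x : ι → K} (hx : Function.Injective x)
    {p : K[X]} (hp : p ≠ 0) (hdeg : p.natDegree ≤ Fintype.card ι) (hroot : ∀ i, p.IsRoot (x i))
    {a b : K} (hode : X * derivative (derivative p) + (C a - X) * derivative p + C b * p = 0)
    (i : ι) : balancingCharge x i = a := by
  classical
  have hfac : p = C p.leadingCoeff * nodal univ x :=
    eq_C_leadingCoeff_mul_nodal hx.injOn hdeg fun j _ => hroot j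
  have hp' : (derivative p).eval (x i) ≠ 0 := by
    rw [hfac, derivative_C_mul, eval_C_mul, eval_nodal_derivative_eval_node_eq (mem_univ i)]
    refine mul_ne_zero (leadingCoeff_ne_zero.2 hp) (eval_nodal_not_at_node fun j hj => ?_)
    exact hx.ne (ne_of_mem_erase hj).symm
  have hp'' : (derivative (derivative p)).eval (x i) =
      2 * (derivative p).eval (x i) * ∑ j, (x i - x j)⁻¹ := by
    rw [hfac, derivative_C_mul, derivative_C_mul, eval_C_mul, eval_C_mul,
      eval_derivative_derivative_nodal_at_node hx.injOn (mem_univ i),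
      sum_erase univ (f := fun j => (x i - x j)⁻¹) (by rw [sub_self, inv_zero])]
    ring
  have hode' := congrArg (eval (x i)) hode
  simp only [eval_add, eval_mul, eval_sub, eval_X, eval_C, (hroot i).eq_zero, hp'',
    eval_zero] at hode'
  refine mul_left_cancel₀ hp' ?_
  simp only [balancingCharge, div_eq_mul_inv, ← mul_sum]
  linear_combination -hode'

variable [LinearOrder K] [IsStrictOrderedRing K]

/-- A discrete maximum principle: at the index where `u i / v i` is largest, each interaction term
of `u` is at most that of `v`, so `v i ≤ u i` is impossible there. -/
theorem lt_of_balancingCharge_lt [LinearOrder ι] {u v : ι → K} (hu : StrictMono u)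
    (hv : StrictMono v) (hv0 : ∀ i, 0 < v i) (h : ∀ i, balancingCharge u i < balancingCharge v i)
    (i : ι) : u i < v i := by
  obtain ⟨k, -, hk⟩ := exists_max_image univ (fun i => u i / v i) ⟨i, mem_univ i⟩
  have hratio : ∀ j, u j * v k ≤ u k * v j := fun j =>
    (div_le_div_iff₀ (hv0 j) (hv0 k)).1 (hk j (mem_univ j))
  have hterm : ∀ j, u k / (u k - u j) ≤ v k / (v k - v j) := by
    intro j
    have := hratio j
    rcases lt_trichotomy j k with hj | rfl | hj
    · rw [div_le_div_iff₀ (sub_pos.2 (hu hj)) (sub_pos.2 (hv hj))]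
      linarith
    · simp
    · rw [← neg_sub (u j), ← neg_sub (v j), div_neg, div_neg, neg_le_neg_iff,
        div_le_div_iff₀ (sub_pos.2 (hv hj)) (sub_pos.2 (hu hj))]
      linarith
  have hlt : u k < v k := by
    have hsum := sum_le_sum fun j (_ : j ∈ univ) => hterm j
    have hcharge := h k
    simp only [balancingCharge] at hcharge
    linarith
  exact (div_lt_one (hv0 i)).1 ((hk i (mem_univ i)).trans_lt ((div_lt_one (hv0 k)).2 hlt))

variable {n : ℕ} {x : Fin (n + 1) → K}

theorem balancingCharge_castSucc_lt (hx : StrictMono x) (hx0 : ∀ i, 0 < x i) (i : Fin n) :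
    balancingCharge (fun j : Fin n => x j.castSucc) i < balancingCharge x i.castSucc := by
  have hlast : x i.castSucc / (x i.castSucc - x (Fin.last n)) < 0 :=
    div_neg_of_pos_of_neg (hx0 _) (sub_neg.2 (hx i.castSucc_lt_last))
  simp only [balancingCharge, Fin.sum_univ_castSucc]
  linarith

theorem add_two_lt_balancingCharge_succ (hx : StrictMono x) (hx0 : 0 < x 0) (i : Fin n) :
    balancingCharge x i.succ + 2 < balancingCharge (fun j : Fin n => x j.succ) i := by
  have hzero : 1 < x i.succ / (x i.succ - x 0) :=
    (one_lt_div (sub_pos.2 (hx i.succ_pos))).2 (sub_lt_self _ hx0)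
  simp only [balancingCharge, Fin.sum_univ_succ (n := n)]
  linarith

end BalancingCharge

section Interlaces

variable {β : Type*} {n : ℕ} {x : Fin (n + 1) → β}

theorem exists_eq_castSucc_and_eq_succ_of_consecutive [LinearOrder β] (hx : StrictMono x)
    {a b : β} (hab : a < b) (ha : a ∈ Set.range x) (hb : b ∈ Set.range x)
    (hgap : ∀ u ∈ Set.Ioo a b, u ∉ Set.range x) : ∃ k : Fin n, a = x k.castSucc ∧ b = x k.succ := by
  obtain ⟨i, rfl⟩ := ha
  obtain ⟨j, rfl⟩ := hb
  have hij : i < j := hx.lt_iff_lt.1 hab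
  obtain ⟨k, rfl⟩ := Fin.exists_castSucc_eq.2 (hij.trans_le j.le_last).ne
  refine ⟨k, rfl, congrArg x (le_antisymm ?_ (Fin.castSucc_lt_iff_succ_le.1 hij))⟩
  by_contra! hkj
  exact hgap _ ⟨hx k.castSucc_lt_succ, hx hkj⟩ ⟨_, rfl⟩

/-- The sequences `x` and `y` strictly interlace: `x₀ < y₀ < x₁ < y₁ < ⋯ < yₙ₋₁ < xₙ`. -/
def Interlaces [Preorder β] (x : Fin (n + 1) → β) (y : Fin n → β) : Prop :=
  ∀ i, y i ∈ Set.Ioo (x i.castSucc) (x i.succ)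

namespace Interlaces

theorem strictMono [Preorder β] {y : Fin n → β} (h : Interlaces x y) : StrictMono x :=
  Fin.strictMono_iff_lt_succ.2 fun i => (h i).1.trans (h i).2

variable [LinearOrder β] {y : Fin n → β}

theorem eq_of_mem_Ioo (h : Interlaces x y) {k l : Fin n}
    (hl : y l ∈ Set.Ioo (x k.castSucc) (x k.succ)) : l = k := by
  have hlk : l.castSucc < k.succ := h.strictMono.lt_iff_lt.1 ((h l).1.trans hl.2)
  have hkl : k.castSucc < l.succ := h.strictMono.lt_iff_lt.1 (hl.1.trans (h l).2)
  exact le_antisymm (Fin.castSucc_lt_succ_iff.1 hlk) (Fin.castSucc_lt_succ_iff.1 hkl)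

theorem existsUnique_mem_Ioo (h : Interlaces x y) {a b : β} (hab : a < b)
    (ha : a ∈ Set.range x) (hb : b ∈ Set.range x) (hgap : ∀ u ∈ Set.Ioo a b, u ∉ Set.range x) :
    ∃! c, c ∈ Set.Ioo a b ∧ c ∈ Set.range y := by
  obtain ⟨k, rfl, rfl⟩ :=
    exists_eq_castSucc_and_eq_succ_of_consecutive h.strictMono hab ha hb hgap
  refine ⟨y k, ⟨h k, k, rfl⟩, ?_⟩
  rintro _ ⟨hl, l, rfl⟩
  rw [h.eq_of_mem_Ioo hl]

end Interlaces

theorem interlaces_of_balancingCharge_eq {K : Type*} [Field K] [LinearOrder K]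
    [IsStrictOrderedRing K] {n : ℕ} {x : Fin (n + 1) → K} {y : Fin n → K}
    (hx : StrictMono x) (hx0 : ∀ i, 0 < x i) (hy : StrictMono y) (hy0 : ∀ i, 0 < y i) {a b : K}
    (hxa : ∀ i, balancingCharge x i = a) (hyb : ∀ i, balancingCharge y i = b) (hab : a ≤ b)
    (hba : b ≤ a + 2) : Interlaces x y := by
  refine fun i => ⟨?_, ?_⟩
  · refine lt_of_balancingCharge_lt (hx.comp Fin.strictMono_castSucc) hy hy0 (fun j => ?_) i
    calc balancingCharge (x ∘ Fin.castSucc) j < balancingCharge x j.castSucc :=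
          balancingCharge_castSucc_lt hx hx0 j
      _ = a := hxa _
      _ ≤ b := hab
      _ = balancingCharge y j := (hyb j).symm
  · refine lt_of_balancingCharge_lt hy (hx.comp Fin.strictMono_succ) (fun j => hx0 _)
      (fun j => ?_) i
    calc balancingCharge y j = b := hyb j
      _ ≤ a + 2 := hba
      _ = balancingCharge x j.succ + 2 := by rw [hxa]
      _ < balancingCharge (x ∘ Fin.succ) j := add_two_lt_balancingCharge_succ hx (hx0 0) j

end Interlaces

section Rolle

open Filter Topology

/-- Rolle's theorem on a half-line, obtained from the bounded case through the substitution
`x = a - log s`. -/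
theorem exists_hasDerivAt_eq_zero_Ioi {f f' : ℝ → ℝ} {a l : ℝ} (hfa : Tendsto f (𝓝[>] a) (𝓝 l))
    (hftop : Tendsto f atTop (𝓝 l)) (hff' : ∀ x ∈ Set.Ioi a, HasDerivAt f (f' x) x) :
    ∃ c ∈ Set.Ioi a, f' c = 0 := by
  have hmem : ∀ s ∈ Set.Ioo (0 : ℝ) 1, a - Real.log s ∈ Set.Ioi a := fun s hs =>
    lt_sub_iff_add_lt.2 (add_lt_of_neg_right a (Real.log_neg hs.1 hs.2))
  have hzero : Tendsto (fun s : ℝ => a - Real.log s) (𝓝[>] 0) atTop :=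
    tendsto_atTop_add_const_left _ a (tendsto_neg_atBot_atTop.comp Real.tendsto_log_nhdsGT_zero)
  have hone : Tendsto (fun s : ℝ => a - Real.log s) (𝓝[<] 1) (𝓝[>] a) := by
    refine tendsto_nhdsWithin_iff.2 ⟨?_, ?_⟩
    · have hcont : ContinuousAt (fun s : ℝ => a - Real.log s) 1 :=
        continuousAt_const.sub (Real.continuousAt_log one_ne_zero)
      simpa using hcont.tendsto.mono_left nhdsWithin_le_nhds
    · filter_upwards [Ioo_mem_nhdsLT (zero_lt_one' ℝ)] with s hs using hmem s hs
  obtain ⟨s, hs, hs0⟩ := exists_hasDerivAt_eq_zero' (zero_lt_one' ℝ) (hftop.comp hzero)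
    (hfa.comp hone) fun s hs => (hff' _ (hmem s hs)).comp s
      ((Real.hasDerivAt_log hs.1.ne').const_sub a)
  exact ⟨_, hmem s hs, by simpa [hs.1.ne'] using hs0⟩

open Polynomial in
theorem tendsto_rpow_mul_exp_neg_mul_eval_atTop (s : ℝ) (p : ℝ[X]) :
    Tendsto (fun x : ℝ => x ^ s * Real.exp (-x) * p.eval x) atTop (𝓝 0) := by
  have hterm : ∀ k ∈ range (p.natDegree + 1),
      Tendsto (fun x : ℝ => p.coeff k * (x ^ (s + k) * Real.exp (-1 * x))) atTop (𝓝 0) :=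
    fun k _ => by
      simpa using (tendsto_rpow_mul_exp_neg_mul_atTop_nhds_zero (s + k) 1 one_pos).const_mul
        (p.coeff k)
  have hsum := tendsto_finsetSum _ hterm
  rw [sum_const_zero] at hsum
  refine hsum.congr' ?_
  filter_upwards [eventually_gt_atTop 0] with x hx
  rw [eval_eq_sum_range, mul_sum]
  refine sum_congr rfl fun k _ => ?_
  rw [Real.rpow_add hx, Real.rpow_natCast, neg_one_mul]
  ring

end Rolle

section LaguerrePoly

open Polynomial

/-- The generalized Laguerre polynomial `L_n^α` as an element of `ℝ[X]`, giving access to its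
coefficients, degree and roots. -/
noncomputable def laguerrePoly (α : ℝ) (n : ℕ) : ℝ[X] :=
  ∑ k ∈ range (n + 1), monomial k ((-1 : ℝ) ^ k * (∏ i ∈ range (n - k), (α + k + 1 + i)) /
    ((Nat.factorial (n - k) : ℝ) * (Nat.factorial k : ℝ)))

theorem eval_laguerrePoly (α : ℝ) (n : ℕ) (x : ℝ) :
    (laguerrePoly α n).eval x = laguerre α n x := by
  simp [laguerrePoly, laguerre, eval_finsetSum]

theorem coeff_laguerrePoly_add (α : ℝ) (k m : ℕ) :
    (laguerrePoly α (k + m)).coeff k = (-1 : ℝ) ^ k * (∏ i ∈ range m, (α + k + 1 + i)) /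
      ((Nat.factorial m : ℝ) * (Nat.factorial k : ℝ)) := by
  simp [laguerrePoly, coeff_monomial]

theorem coeff_laguerrePoly_eq_zero (α : ℝ) {n k : ℕ} (h : n < k) :
    (laguerrePoly α n).coeff k = 0 := by
  simp [laguerrePoly, coeff_monomial, h.not_ge]

theorem natDegree_laguerrePoly_le (α : ℝ) (n : ℕ) : (laguerrePoly α n).natDegree ≤ n :=
  natDegree_le_iff_coeff_eq_zero.2 fun _ => coeff_laguerrePoly_eq_zero α

theorem laguerrePoly_ne_zero (α : ℝ) (n : ℕ) : laguerrePoly α n ≠ 0 :=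
  fun h => by simpa [h, Nat.factorial_ne_zero] using (coeff_laguerrePoly_add α n 0).symm

theorem derivative_laguerrePoly_succ (α : ℝ) (n : ℕ) :
    derivative (laguerrePoly α (n + 1)) = -laguerrePoly (α + 1) n := by
  ext k
  rw [coeff_derivative, coeff_neg]
  rcases lt_or_ge n k with h | h
  · rw [coeff_laguerrePoly_eq_zero _ h, coeff_laguerrePoly_eq_zero _ (Nat.succ_lt_succ h)]
    simp
  · obtain ⟨m, rfl⟩ := Nat.exists_eq_add_of_le h
    have hprod : ∏ i ∈ range m, (α + (k + 1 : ℕ) + 1 + i) =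
        ∏ i ∈ range m, (α + 1 + k + 1 + i) :=
      prod_congr rfl fun i _ => by push_cast; ring
    rw [add_right_comm, coeff_laguerrePoly_add, coeff_laguerrePoly_add, hprod, Nat.factorial_succ]
    push_cast
    field_simp
    ring

/-- Coefficientwise, `(α + k + 1) * C(n + 1 + α, n - k) = (n + 1 - k) * C(n + 1 + α, n + 1 - k)`. -/
theorem X_mul_derivative_laguerrePoly_add_C_mul (α : ℝ) (n : ℕ) :
    X * derivative (laguerrePoly (α + 1) n) + C (α + 1) * laguerrePoly (α + 1) n =
      C ((n : ℝ) + 1) * laguerrePoly α (n + 1) - X * derivative (laguerrePoly α (n + 1)) := by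
  ext k
  rw [coeff_add, coeff_sub, coeff_C_mul, coeff_C_mul, coeff_X_mul_derivative,
    coeff_X_mul_derivative]
  rcases lt_or_ge n k with h | h
  · rw [coeff_laguerrePoly_eq_zero _ h]
    rcases (Nat.succ_le_of_lt h).eq_or_lt with rfl | h'
    · push_cast
      ring
    · rw [coeff_laguerrePoly_eq_zero _ h']
      ring
  · obtain ⟨m, rfl⟩ := Nat.exists_eq_add_of_le h
    have hprod : ∏ i ∈ range m, (α + k + 1 + (i + 1 : ℕ)) = ∏ i ∈ range m, (α + 1 + k + 1 + i) :=
      prod_congr rfl fun i _ => by push_cast; ring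
    rw [add_assoc, coeff_laguerrePoly_add, coeff_laguerrePoly_add, prod_range_succ', hprod,
      Nat.factorial_succ]
    push_cast
    field_simp
    ring

theorem X_mul_derivative_laguerrePoly_add (α : ℝ) (n : ℕ) :
    X * derivative (laguerrePoly (α + 1) n) + (C (α + 1) - X) * laguerrePoly (α + 1) n =
      C ((n : ℝ) + 1) * laguerrePoly α (n + 1) := by
  linear_combination X_mul_derivative_laguerrePoly_add_C_mul α n -
    X * derivative_laguerrePoly_succ α n

theorem laguerrePoly_differential_equation (α : ℝ) (n : ℕ) :
    X * derivative (derivative (laguerrePoly α n)) +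
      (C (α + 1) - X) * derivative (laguerrePoly α n) + C (n : ℝ) * laguerrePoly α n = 0 := by
  rcases n with _ | n
  · simp [laguerrePoly]
  · rw [derivative_laguerrePoly_succ, derivative_neg]
    push_cast
    linear_combination -X_mul_derivative_laguerrePoly_add α n

end LaguerrePoly

section WeightedLaguerre

open Filter Topology

/-- The function `x ^ α * exp (-x) * L_n^α(x)`, whose derivatives give the Rodrigues formula and
to which Rolle's theorem is applied. -/
noncomputable def weightedLaguerre (α : ℝ) (n : ℕ) (x : ℝ) : ℝ :=
  x ^ α * Real.exp (-x) * (laguerrePoly α n).eval x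

theorem weightedLaguerre_eq_zero_iff {α : ℝ} {n : ℕ} {x : ℝ} (hx : 0 < x) :
    weightedLaguerre α n x = 0 ↔ laguerre α n x = 0 := by
  simp [weightedLaguerre, eval_laguerrePoly, (Real.rpow_pos_of_pos hx α).ne']

theorem weightedLaguerre_apply_zero {α : ℝ} (hα : α ≠ 0) (n : ℕ) : weightedLaguerre α n 0 = 0 := by
  simp [weightedLaguerre, Real.zero_rpow hα]

theorem continuous_weightedLaguerre {α : ℝ} (hα : 0 ≤ α) (n : ℕ) :
    Continuous (weightedLaguerre α n) :=
  ((Real.continuous_rpow_const hα).mul (by fun_prop)).mul (laguerrePoly α n).continuous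

theorem tendsto_weightedLaguerre_atTop (α : ℝ) (n : ℕ) :
    Tendsto (weightedLaguerre α n) atTop (𝓝 0) :=
  tendsto_rpow_mul_exp_neg_mul_eval_atTop α (laguerrePoly α n)

open Polynomial in
theorem hasDerivAt_weightedLaguerre (α : ℝ) (n : ℕ) {x : ℝ} (hx : 0 < x) :
    HasDerivAt (weightedLaguerre (α + 1) n) ((n + 1) * weightedLaguerre α (n + 1) x) x := by
  have h := congrArg (eval x) (X_mul_derivative_laguerrePoly_add α n)
  simp only [eval_add, eval_mul, eval_sub, eval_X, eval_C] at h
  refine (((Real.hasDerivAt_rpow_const (p := α + 1) (Or.inl hx.ne')).mul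
    (hasDerivAt_neg x).exp).mul ((laguerrePoly (α + 1) n).hasDerivAt x)).congr_deriv ?_
  rw [weightedLaguerre, add_sub_cancel_right, Pi.mul_apply, Real.rpow_add_one hx.ne']
  linear_combination x ^ α * Real.exp (-x) * h

variable {α a : ℝ} {n : ℕ}

theorem laguerre_eq_zero_of_succ_mul_weightedLaguerre_eq_zero {x : ℝ} (hx : 0 < x)
    (h : ((n : ℝ) + 1) * weightedLaguerre α (n + 1) x = 0) : laguerre α (n + 1) x = 0 :=
  (weightedLaguerre_eq_zero_iff hx).1 ((mul_eq_zero_iff_left n.cast_add_one_ne_zero).1 h)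

theorem exists_laguerre_eq_zero_mem_Ioo (hα : -1 < α) {b : ℝ} (ha : 0 ≤ a) (hab : a < b)
    (hwa : weightedLaguerre (α + 1) n a = 0) (hwb : weightedLaguerre (α + 1) n b = 0) :
    ∃ z ∈ Set.Ioo a b, laguerre α (n + 1) z = 0 := by
  obtain ⟨z, hz, hz0⟩ := exists_hasDerivAt_eq_zero hab
    (continuous_weightedLaguerre (by linarith) n).continuousOn (hwa.trans hwb.symm)
    fun x hx => hasDerivAt_weightedLaguerre α n (ha.trans_lt hx.1)
  exact ⟨z, hz, laguerre_eq_zero_of_succ_mul_weightedLaguerre_eq_zero (ha.trans_lt hz.1) hz0⟩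

theorem exists_laguerre_eq_zero_mem_Ioi (hα : -1 < α) (ha : 0 ≤ a)
    (hwa : weightedLaguerre (α + 1) n a = 0) : ∃ z ∈ Set.Ioi a, laguerre α (n + 1) z = 0 := by
  have hlim : Tendsto (weightedLaguerre (α + 1) n) (𝓝[>] a) (𝓝 0) := by
    rw [← hwa]
    exact (continuous_weightedLaguerre (by linarith) n).continuousWithinAt
  obtain ⟨z, hz, hz0⟩ := exists_hasDerivAt_eq_zero_Ioi hlim
    (tendsto_weightedLaguerre_atTop (α + 1) n)
    fun x hx => hasDerivAt_weightedLaguerre α n (ha.trans_lt hx)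
  exact ⟨z, hz, laguerre_eq_zero_of_succ_mul_weightedLaguerre_eq_zero (ha.trans_lt hz) hz0⟩

end WeightedLaguerre

section LaguerreZeros

variable {α : ℝ} {n : ℕ}

theorem laguerre_pos_of_nonpos (hα : -1 < α) (n : ℕ) {x : ℝ} (hx : x ≤ 0) :
    0 < laguerre α n x := by
  have hprod : ∀ k m : ℕ, 0 < ∏ i ∈ range m, (α + k + 1 + i) := fun k m =>
    prod_pos fun i _ => by linarith [k.cast_nonneg (α := ℝ), i.cast_nonneg (α := ℝ)]
  refine sum_pos' (fun k _ => ?_) ⟨0, by simp, ?_⟩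
  · have hsign : (-1 : ℝ) ^ k * x ^ k = (-x) ^ k := by rw [← mul_pow, neg_one_mul]
    rw [mul_div_assoc, mul_right_comm, hsign]
    exact mul_nonneg (pow_nonneg (neg_nonneg.2 hx) k) (div_pos (hprod k _) (by positivity)).le
  · simpa using div_pos (hprod 0 n) (by positivity)

/-- The finite set of real zeros of `L_n^α`. -/
noncomputable def laguerreZeros (α : ℝ) (n : ℕ) : Finset ℝ :=
  (laguerrePoly α n).roots.toFinset

theorem mem_laguerreZeros {z : ℝ} : z ∈ laguerreZeros α n ↔ laguerre α n z = 0 := by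
  rw [laguerreZeros, Multiset.mem_toFinset, Polynomial.mem_roots (laguerrePoly_ne_zero α n),
    Polynomial.IsRoot.def, eval_laguerrePoly]

theorem pos_of_mem_laguerreZeros (hα : -1 < α) {z : ℝ} (hz : z ∈ laguerreZeros α n) : 0 < z := by
  by_contra! hz0
  exact (laguerre_pos_of_nonpos hα n hz0).ne' (mem_laguerreZeros.1 hz)

theorem card_laguerreZeros_le (α : ℝ) (n : ℕ) : #(laguerreZeros α n) ≤ n :=
  (Multiset.toFinset_card_le _).trans <|
    (Polynomial.card_roots' _).trans (natDegree_laguerrePoly_le α n)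

theorem card_laguerreZeros_lt_card_succ (hα : -1 < α) (n : ℕ) :
    #(laguerreZeros (α + 1) n) < #(laguerreZeros α (n + 1)) := by
  set s := insert 0 (laguerreZeros (α + 1) n)
  have hpos : ∀ z ∈ laguerreZeros (α + 1) n, 0 < z := fun z =>
    pos_of_mem_laguerreZeros (by linarith)
  have hcard : #s = #(laguerreZeros (α + 1) n) + 1 :=
    card_insert_of_notMem fun h => (hpos 0 h).false
  have hnode : ∀ a ∈ s, 0 ≤ a ∧ weightedLaguerre (α + 1) n a = 0 := by
    intro a ha
    rcases mem_insert.1 ha with rfl | ha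
    · exact ⟨le_rfl, weightedLaguerre_apply_zero (by linarith) n⟩
    · exact ⟨(hpos a ha).le, (weightedLaguerre_eq_zero_iff (hpos a ha)).2 (mem_laguerreZeros.1 ha)⟩
  have hne : s.Nonempty := insert_nonempty _ _
  obtain ⟨hmax0, hmax⟩ := hnode _ (s.max'_mem hne)
  obtain ⟨r, hr, hr0⟩ := exists_laguerre_eq_zero_mem_Ioi hα hmax0 hmax
  have hinterleaved : #s ≤ #((laguerreZeros α (n + 1)).erase r) + 1 := by
    refine card_le_of_interleaved fun a ha b hb hab _ => ?_
    obtain ⟨z, hz, hz0⟩ :=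
      exists_laguerre_eq_zero_mem_Ioo hα (hnode a ha).1 hab (hnode a ha).2 (hnode b hb).2
    have hzr : z < r := hz.2.trans_le ((s.le_max' b hb).trans hr.le)
    exact ⟨z, mem_erase.2 ⟨hzr.ne, mem_laguerreZeros.2 hz0⟩, hz⟩
  rw [card_erase_add_one (mem_laguerreZeros.2 hr0), hcard] at hinterleaved
  exact hinterleaved

theorem card_laguerreZeros (hα : -1 < α) (n : ℕ) : #(laguerreZeros α n) = n := by
  refine (card_laguerreZeros_le α n).antisymm ?_
  induction n generalizing α with
  | zero => exact Nat.zero_le _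
  | succ n ih =>
    exact (ih (by linarith)).trans_lt (card_laguerreZeros_lt_card_succ hα n)

/-- The zeros of `L_n^α` in increasing order, indexed from `0`. -/
noncomputable def laguerreZero (hα : -1 < α) (n : ℕ) : Fin n ↪o ℝ :=
  (laguerreZeros α n).orderEmbOfFin (card_laguerreZeros hα n)

theorem mem_range_laguerreZero (hα : -1 < α) {z : ℝ} :
    z ∈ Set.range (laguerreZero hα n) ↔ laguerre α n z = 0 := by
  rw [laguerreZero, range_orderEmbOfFin, mem_coe, mem_laguerreZeros]

theorem laguerreZero_pos (hα : -1 < α) (i : Fin n) : 0 < laguerreZero hα n i :=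
  pos_of_mem_laguerreZeros hα (orderEmbOfFin_mem _ _ i)

theorem balancingCharge_laguerreZero (hα : -1 < α) (i : Fin n) :
    balancingCharge (laguerreZero hα n) i = α + 1 := by
  refine balancingCharge_eq_of_differential_equation (laguerreZero hα n).injective
    (laguerrePoly_ne_zero α n) ?_ (fun j => ?_) (laguerrePoly_differential_equation α n) i
  · simpa using natDegree_laguerrePoly_le α n
  · exact (eval_laguerrePoly α n _).trans ((mem_range_laguerreZero hα).1 ⟨j, rfl⟩)

theorem interlaces_laguerreZero {β : ℝ} (hα : -1 < α) (hβ : -1 < β) (hαβ : α ≤ β)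
    (hβα : β ≤ α + 2) (n : ℕ) : Interlaces (laguerreZero hα (n + 1)) (laguerreZero hβ n) :=
  interlaces_of_balancingCharge_eq (laguerreZero hα _).strictMono (laguerreZero_pos hα)
    (laguerreZero hβ n).strictMono (laguerreZero_pos hβ) (balancingCharge_laguerreZero hα)
    (balancingCharge_laguerreZero hβ) (by linarith) (by linarith)

end LaguerreZeros

/-- At `t = 0` this is the classical interlacing of the zeros of `L_{n+1}^α` and `L_n^α`. -/
theorem zeros_interlace_L_n_and_L_nsub1_shifted_general {α t : ℝ} (hα : -1 < α) (ht0 : 0 ≤ t)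
    (ht2 : t ≤ 2) (n : ℕ) :
    (∀ x x' : ℝ, x < x' → laguerre α (n + 1) x = 0 → laguerre α (n + 1) x' = 0 →
      (∀ u ∈ Set.Ioo x x', laguerre α (n + 1) u ≠ 0) →
      ∃! y, y ∈ Set.Ioo x x' ∧ laguerre (α + t) n y = 0) ∧
    (∀ y : ℝ, laguerre (α + t) n y = 0 →
      ∃ x x' : ℝ, laguerre α (n + 1) x = 0 ∧ laguerre α (n + 1) x' = 0 ∧ x < y ∧ y < x') := by
  have hβ : -1 < α + t := by linarith
  have hinter := interlaces_laguerreZero hα hβ (by linarith) (by linarith) n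
  simp only [ne_eq, ← mem_range_laguerreZero hα, ← mem_range_laguerreZero hβ]
  refine ⟨fun x x' => hinter.existsUnique_mem_Ioo, ?_⟩
  rintro _ ⟨i, rfl⟩
  exact ⟨_, _, ⟨i.castSucc, rfl⟩, ⟨i.succ, rfl⟩, hinter i⟩

theorem zeros_interlace_L_n_and_L_nsub1_shifted (α t : ℝ) (hα : α > -1) (ht0 : 0 < t)
    (ht2 : t ≤ 2) (n : ℕ) (hn : 2 ≤ n) :
    (∀ x x' : ℝ, x < x' → laguerre α n x = 0 → laguerre α n x' = 0 →
      (∀ u ∈ Set.Ioo x x', laguerre α n u ≠ 0) →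
      ∃! y, y ∈ Set.Ioo x x' ∧ laguerre (α + t) (n - 1) y = 0) ∧
    (∀ y : ℝ, laguerre (α + t) (n - 1) y = 0 →
      ∃ x x' : ℝ, laguerre α n x = 0 ∧ laguerre α n x' = 0 ∧ x < y ∧ y < x') := by
  obtain ⟨m, rfl⟩ := Nat.exists_eq_add_of_le' (one_le_two.trans hn)
  exact zeros_interlace_L_n_and_L_nsub1_shifted_general hα ht0.le ht2 m
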